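/- Let k ≥ 2 be an integer, u = 1/k, and let p_0, p_1, p_2 be probability densities with respect to a common dominating measure ν. Then u | d_{−u}²(p_0, p_1) − d_{−u}²(p_0, p_2) | ≤ ∫ p_0^{1−u} | p_1^u − p_2^u | dν ≤ ( ∫ | p_1^u − p_2^u |^{1/u} dν )^u ≤ 2 ( ∫ | p_1 − p_2 | dν )^u. In particular, if d_{−u}²(p_0, p_1) > ε and ∫|p_1 − p_2| dν ≤ λ, then d_{−u}²(p_0, p_2) ≥ ε − u^{−1}·2·(2λ)^u. -/

import Mathlib

/-!
For `u ∈ (0, 1)` the integrand of `dDiv ν (-u) p q` equals `p ^ (1 - u) * q ^ u - p` pointwise, also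
where `p` or `q` vanishes. By Young's inequality it is integrable, so `u` times the difference of two
divergences is the integral of `p₀ ^ (1 - u) * (p₁ ^ u - p₂ ^ u)` up to sign. This gives the first
bound; the second is Hölder's inequality with exponents `1 / (1 - u)` and `1 / u`. For the third,
subadditivity of `x ↦ x ^ u` yields `|a ^ u - b ^ u| ^ (1 / u) ≤ |a - b|`, hence the bound holds even
without the factor `2`. The final claim chains the three bounds.
-/

open MeasureTheory
open scoped ENNReal

/-- The divergence `d_t²(p,q) = t⁻¹ ∫ p ((p/q)^t − 1) dν`. -/
noncomputable def dDiv {𝒴 : Type*} [MeasurableSpace 𝒴] (ν : Measure 𝒴) (t : ℝ)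
    (p q : 𝒴 → ℝ) : ℝ :=
  t⁻¹ * ∫ y, p y * ((p y / q y) ^ t - 1) ∂ν

/-- `p` is a probability density with respect to `ν`. -/
def IsDensity {𝒴 : Type*} [MeasurableSpace 𝒴] (ν : Measure 𝒴) (p : 𝒴 → ℝ) : Prop :=
  Measurable p ∧ (∀ y, 0 ≤ p y) ∧ ∫ y, p y ∂ν = 1

lemma integrand_eq {u p q : ℝ} (hu0 : 0 < u) (hu1 : u < 1) (hp : 0 ≤ p) (hq : 0 ≤ q) :
    p * ((p / q) ^ (-u) - 1) = p ^ (1 - u) * q ^ u - p := by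
  rcases hp.eq_or_lt with rfl | hp
  · rw [Real.zero_rpow (by linarith)]; ring
  rcases hq.eq_or_lt with rfl | hq
  -- `p / 0 = 0` and `0 ^ (-u) = 0` in Lean, which agrees with `0 ^ u = 0` on the right.
  · rw [div_zero, Real.zero_rpow (by linarith), Real.zero_rpow (by linarith)]; ring
  rw [Real.div_rpow hp.le hq.le, Real.rpow_neg hq.le, Real.rpow_neg hp.le,
    Real.rpow_sub hp, Real.rpow_one]
  have := Real.rpow_pos_of_pos hp u
  have := Real.rpow_pos_of_pos hq u
  field_simp

lemma abs_rpow_sub_rpow_le {u a b : ℝ} (hu0 : 0 < u) (hu1 : u < 1) (ha : 0 ≤ a) (hb : 0 ≤ b) :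
    |a ^ u - b ^ u| ≤ |a - b| ^ u := by
  wlog hab : b ≤ a generalizing a b
  · rw [abs_sub_comm, abs_sub_comm a]
    exact this hb ha (le_of_not_ge hab)
  have hle : b ^ u ≤ a ^ u := Real.rpow_le_rpow hb hab hu0.le
  rw [abs_of_nonneg (sub_nonneg.2 hle), abs_of_nonneg (sub_nonneg.2 hab)]
  have := Real.rpow_add_le_add_rpow (sub_nonneg.2 hab) hb hu0.le hu1.le
  rw [sub_add_cancel] at this
  linarith

lemma abs_rpow_sub_rpow_rpow_le {u a b : ℝ} (hu0 : 0 < u) (hu1 : u < 1) (ha : 0 ≤ a)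
    (hb : 0 ≤ b) : |a ^ u - b ^ u| ^ (1 / u) ≤ |a - b| := by
  calc |a ^ u - b ^ u| ^ (1 / u) ≤ (|a - b| ^ u) ^ (1 / u) :=
        Real.rpow_le_rpow (abs_nonneg _) (abs_rpow_sub_rpow_le hu0 hu1 ha hb) (by positivity)
    _ = |a - b| := by
        rw [← Real.rpow_mul (abs_nonneg _), mul_one_div_cancel hu0.ne', Real.rpow_one]

lemma IsDensity.integrable {𝒴 : Type*} [MeasurableSpace 𝒴] {ν : Measure 𝒴} {p : 𝒴 → ℝ}
    (h : IsDensity ν p) : Integrable p ν := by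
  by_contra hn
  have := h.2.2
  rw [integral_undef hn] at this
  exact zero_ne_one this

/-- The Hellinger-type affinity `∫ p ^ (1 - u) * q ^ u` is finite, by Young's inequality. -/
lemma integrable_affinity {𝒴 : Type*} [MeasurableSpace 𝒴] {ν : Measure 𝒴} {p q : 𝒴 → ℝ} {u : ℝ}
    (hu0 : 0 < u) (hu1 : u < 1) (hp : IsDensity ν p) (hq : IsDensity ν q) :
    Integrable (fun y => p y ^ (1 - u) * q y ^ u) ν := by
  refine Integrable.mono' ((hp.integrable.const_mul (1 - u)).add (hq.integrable.const_mul u))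
    ((hp.1.pow_const _).mul (hq.1.pow_const _)).aestronglyMeasurable (Filter.Eventually.of_forall ?_)
  intro y
  have h1 := Real.rpow_nonneg (hp.2.1 y) (1 - u)
  have h2 := Real.rpow_nonneg (hq.2.1 y) u
  rw [Real.norm_of_nonneg (mul_nonneg h1 h2)]
  exact Real.geom_mean_le_arith_mean2_weighted (by linarith) hu0.le (hp.2.1 y) (hq.2.1 y) (by ring)

lemma mul_dDiv_neg {𝒴 : Type*} [MeasurableSpace 𝒴] {ν : Measure 𝒴} {p q : 𝒴 → ℝ} {u : ℝ}
    (hu0 : 0 < u) (hu1 : u < 1) (hp : IsDensity ν p) (hq : IsDensity ν q) :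
    u * dDiv ν (-u) p q = 1 - ∫ y, p y ^ (1 - u) * q y ^ u ∂ν := by
  have : ∫ y, p y * ((p y / q y) ^ (-u) - 1) ∂ν = (∫ y, p y ^ (1 - u) * q y ^ u ∂ν) - 1 := by
    have h := integral_sub (integrable_affinity hu0 hu1 hp hq) hp.integrable
    rw [hp.2.2] at h
    rw [← h]
    exact integral_congr_ae (Filter.Eventually.of_forall fun y =>
      integrand_eq hu0 hu1 (hp.2.1 y) (hq.2.1 y))
  rw [dDiv, this]
  field_simp
  ring

/-- A measurable nonnegative function whose `r`-th power is integrable lies in `L^r`. -/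
lemma memLp_of_integrable_rpow {𝒴 : Type*} [MeasurableSpace 𝒴] {ν : Measure 𝒴} {f : 𝒴 → ℝ} {r : ℝ}
    (hr : 0 < r) (hf : Measurable f) (hf0 : ∀ y, 0 ≤ f y)
    (hi : Integrable (fun y => f y ^ r) ν) : MemLp f (ENNReal.ofReal r) ν := by
  rw [← integrable_norm_rpow_iff hf.aestronglyMeasurable (by simpa using hr) ENNReal.ofReal_ne_top,
    ENNReal.toReal_ofReal hr.le]
  simpa only [Real.norm_of_nonneg (hf0 _)] using hi

/-- Comparison of the `d_{−u}` divergence with the `L¹` distance for `u = 1/k`. -/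
theorem stmt12 {𝒴 : Type*} [MeasurableSpace 𝒴] (ν : Measure 𝒴)
    (p₀ p₁ p₂ : 𝒴 → ℝ)
    (h₀ : IsDensity ν p₀) (h₁ : IsDensity ν p₁) (h₂ : IsDensity ν p₂)
    (k : ℕ) (hk : 2 ≤ k) (u : ℝ) (hu : u = 1 / k) :
    u * |dDiv ν (-u) p₀ p₁ - dDiv ν (-u) p₀ p₂| ≤
        (∫ y, p₀ y ^ (1 - u) * |p₁ y ^ u - p₂ y ^ u| ∂ν) ∧
      (∫ y, p₀ y ^ (1 - u) * |p₁ y ^ u - p₂ y ^ u| ∂ν) ≤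
        (∫ y, |p₁ y ^ u - p₂ y ^ u| ^ (1 / u) ∂ν) ^ u ∧
      (∫ y, |p₁ y ^ u - p₂ y ^ u| ^ (1 / u) ∂ν) ^ u ≤
        2 * (∫ y, |p₁ y - p₂ y| ∂ν) ^ u ∧
      ∀ ε lam : ℝ, ε < dDiv ν (-u) p₀ p₁ → (∫ y, |p₁ y - p₂ y| ∂ν) ≤ lam →
        ε - u⁻¹ * 2 * (2 * lam) ^ u ≤ dDiv ν (-u) p₀ p₂ := by
  have hk' : (2 : ℝ) ≤ k := by exact_mod_cast hk
  have hu0 : 0 < u := by rw [hu]; positivity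
  have hu1 : u < 1 := by rw [hu, div_lt_one (by linarith)]; linarith
  have hd : Integrable (fun y => |p₁ y - p₂ y|) ν := (h₁.integrable.sub h₂.integrable).abs
  have hpt : ∀ y, |p₁ y ^ u - p₂ y ^ u| ^ (1 / u) ≤ |p₁ y - p₂ y| := fun y =>
    abs_rpow_sub_rpow_rpow_le hu0 hu1 (h₁.2.1 y) (h₂.2.1 y)
  have hm : Measurable (fun y => |p₁ y ^ u - p₂ y ^ u|) :=
    ((h₁.1.pow_const u).sub (h₂.1.pow_const u)).norm
  have hpow : Integrable (fun y => |p₁ y ^ u - p₂ y ^ u| ^ (1 / u)) ν := by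
    refine hd.mono' (hm.pow_const _).aestronglyMeasurable (Filter.Eventually.of_forall fun y => ?_)
    rw [Real.norm_of_nonneg (Real.rpow_nonneg (abs_nonneg _) _)]
    exact hpt y
  have A : u * |dDiv ν (-u) p₀ p₁ - dDiv ν (-u) p₀ p₂| ≤
      ∫ y, p₀ y ^ (1 - u) * |p₁ y ^ u - p₂ y ^ u| ∂ν := by
    have e : u * |dDiv ν (-u) p₀ p₁ - dDiv ν (-u) p₀ p₂| =
        |∫ y, (p₀ y ^ (1 - u) * p₁ y ^ u - p₀ y ^ (1 - u) * p₂ y ^ u) ∂ν| := by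
      rw [integral_sub (integrable_affinity hu0 hu1 h₀ h₁) (integrable_affinity hu0 hu1 h₀ h₂)]
      rw [← abs_of_pos hu0, ← abs_mul, abs_of_pos hu0, mul_sub, mul_dDiv_neg hu0 hu1 h₀ h₁,
        mul_dDiv_neg hu0 hu1 h₀ h₂, abs_sub_comm]
      congr 1; ring
    rw [e]
    refine abs_integral_le_integral_abs.trans_eq ?_
    congr 1; ext y
    rw [← mul_sub, abs_mul, abs_of_nonneg (Real.rpow_nonneg (h₀.2.1 y) _)]
  have B : ∫ y, p₀ y ^ (1 - u) * |p₁ y ^ u - p₂ y ^ u| ∂ν ≤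
      (∫ y, |p₁ y ^ u - p₂ y ^ u| ^ (1 / u) ∂ν) ^ u := by
    have hv0 : 0 < 1 - u := by linarith
    have hp0 : ∀ y, (p₀ y ^ (1 - u)) ^ (1 / (1 - u)) = p₀ y := fun y => by
      rw [← Real.rpow_mul (h₀.2.1 y), mul_one_div_cancel hv0.ne', Real.rpow_one]
    have hconj : (1 / (1 - u)).HolderConjugate (1 / u) := by
      rw [Real.holderConjugate_iff]
      refine ⟨by rw [lt_div_iff₀ hv0]; linarith, by simp⟩
    have H := integral_mul_le_Lp_mul_Lq_of_nonneg (μ := ν) hconj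
      (f := fun y => p₀ y ^ (1 - u)) (g := fun y => |p₁ y ^ u - p₂ y ^ u|)
      (Filter.Eventually.of_forall fun y => Real.rpow_nonneg (h₀.2.1 y) _)
      (Filter.Eventually.of_forall fun y => abs_nonneg _)
      (memLp_of_integrable_rpow (by positivity) (h₀.1.pow_const _)
        (fun y => Real.rpow_nonneg (h₀.2.1 y) _) (by simpa only [hp0] using h₀.integrable))
      (memLp_of_integrable_rpow (by positivity) hm (fun y => abs_nonneg _) hpow)
    simpa only [hp0, h₀.2.2, Real.one_rpow, one_mul, one_div_one_div] using H
  have hI : 0 ≤ ∫ y, |p₁ y - p₂ y| ∂ν := integral_nonneg fun y => abs_nonneg _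
  have C : (∫ y, |p₁ y ^ u - p₂ y ^ u| ^ (1 / u) ∂ν) ^ u ≤ 2 * (∫ y, |p₁ y - p₂ y| ∂ν) ^ u := by
    have h1 := Real.rpow_le_rpow
      (integral_nonneg fun y => Real.rpow_nonneg (abs_nonneg (p₁ y ^ u - p₂ y ^ u)) (1 / u))
      (integral_mono hpow hd hpt) hu0.le
    have h2 := Real.rpow_nonneg hI u
    linarith
  refine ⟨A, B, C, fun ε lam hε hlam => ?_⟩
  have h1 : (∫ y, |p₁ y - p₂ y| ∂ν) ^ u ≤ (2 * lam) ^ u :=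
    Real.rpow_le_rpow hI (by linarith) hu0.le
  have h2 : |dDiv ν (-u) p₀ p₁ - dDiv ν (-u) p₀ p₂| ≤ u⁻¹ * (2 * (2 * lam) ^ u) := by
    rw [le_inv_mul_iff₀ hu0]
    linarith
  have h3 := le_abs_self (dDiv ν (-u) p₀ p₁ - dDiv ν (-u) p₀ p₂)
  linarith
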